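/- Every function H : ℂ → ℂ meromorphic on ℂ satisfying the functional equation H(z+1) = z·H(z) + 1/Γ(1−z) for every z ∈ ℂ at which H(z+1), H(z), and 1/Γ(1−z) are all analytic, is differentially transcendental. In particular, Hadamard's factorial function is differentially transcendental. -/

import Mathlib

/-- A function `f : ℂ → ℂ` (meromorphic on `ℂ`) is differentially algebraic over `ℂ(z)`:
there are `n ∈ ℕ` and a nonzero polynomial `P ∈ ℂ[X₀, …, X_{n+1}]` such that
`P (z, f z, f' z, …, f⁽ⁿ⁾ z) = 0` at every point `z` where `f` is analytic. -/
def DifferentiallyAlgebraic (f : ℂ → ℂ) : Prop :=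
  ∃ (n : ℕ) (P : MvPolynomial (Fin (n + 2)) ℂ),
    P ≠ 0 ∧ ∀ z : ℂ, AnalyticAt ℂ f z →
      MvPolynomial.eval
        (fun i : Fin (n + 2) => if i.val = 0 then z else iteratedDeriv (i.val - 1) f z) P = 0

/-!
In a differential domain, `a` is differentially algebraic iff its derivatives generate an algebra of
finite transcendence degree, so such elements are closed under `-` and `*`. If `H` were
differentially algebraic, the Taylor series at a suitable `c` of `H`, `H (z + 1)` and `z` would be
such elements, hence so would that of `g z = H (z + 1) - z H z = 1 / Γ (1 - z)`.

That `g` is not is Hölder's theorem, proved from `g (z + 1) = -z g z`. The differential polynomials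
over `ℂ[z]` that vanish on `g` form a prime ideal stable under the substitution `S` that expresses
`z ↦ z + 1`, namely `S Y_i = -z Y_i - i Y_{i-1}`. As `S` preserves leading monomials, division shows
that a minimal nonzero relation `P` satisfies `S P = q P` with `q ∈ ℂ[z]`, where `deg q` is the
total degree of the leading monomial of `P`, hence positive. A root `α ≠ 0` of `q` forces
`z - (α + 1)` to divide `P`. If `α = 0`, then `Y_0` divides `P` at `z = 1`, and by induction at
every `z = n + 1`, so it divides `P`. Both contradict minimality.
-/

open scoped Topology

/-! ### Differentially algebraic elements of a differential domain -/

section DifferentialAlgebra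

open Algebra

theorem exists_aeval_eq_zero_and_aeval_derivative_ne_zero {R A : Type*} [CommRing R]
    [IsAddTorsionFree R] [CommRing A] [Algebra R A] [FaithfulSMul R A] {a : A}
    (ha : IsAlgebraic R a) :
    ∃ p : Polynomial R, Polynomial.aeval a p = 0 ∧ Polynomial.aeval a p.derivative ≠ 0 := by
  obtain ⟨p, ⟨hp0, hpa⟩, hmin⟩ := WellFounded.has_min (measure Polynomial.natDegree).wf
    {p : Polynomial R | p ≠ 0 ∧ Polynomial.aeval a p = 0} ha
  have hdeg : p.natDegree ≠ 0 := by
    intro hdeg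
    rw [Polynomial.eq_C_of_natDegree_eq_zero hdeg] at hpa hp0
    rw [Polynomial.aeval_C, FaithfulSMul.algebraMap_eq_zero_iff] at hpa
    exact hp0 (by rw [hpa, map_zero])
  have hp' : p.derivative ≠ 0 := fun h => hdeg (Polynomial.derivative_eq_zero.1 h)
  exact ⟨p, hpa, fun h => hmin _ ⟨hp', h⟩ (Polynomial.natDegree_derivative_lt hdeg)⟩

variable {k A : Type*} [Field k] [CommRing A] [Algebra k A] {D : Derivation k A A}

theorem transcendental_of_derivation_eq_one [CharZero k] [Nontrivial A] {z : A} (hz : D z = 1) :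
    Transcendental k z := by
  intro halg
  obtain ⟨p, hp, hp'⟩ := exists_aeval_eq_zero_and_aeval_derivative_ne_zero halg
  refine hp' ?_
  simpa only [hp, map_zero, hz, smul_eq_mul, mul_one] using (D.map_aeval p z).symm

theorem isAlgebraic_adjoin_of_mem [Nontrivial A] {s : Set A} {a : A} (ha : a ∈ s) :
    IsAlgebraic (adjoin k s) a :=
  isAlgebraic_algebraMap (⟨a, subset_adjoin ha⟩ : adjoin k s)

/-- `a` is differentially algebraic over `k`: it is algebraic over `k[s]` for some finite set `s`
such that the derivatives of the elements of `s` are again algebraic over `k[s]`. -/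
def IsDiffAlgebraic (D : Derivation k A A) (a : A) : Prop :=
  ∃ s : Set A, s.Finite ∧ (∀ x ∈ s, IsAlgebraic (adjoin k s) (D x)) ∧ IsAlgebraic (adjoin k s) a

theorem IsDiffAlgebraic.exists_common {a b : A} (ha : IsDiffAlgebraic D a)
    (hb : IsDiffAlgebraic D b) :
    ∃ s : Set A, s.Finite ∧ (∀ x ∈ s, IsAlgebraic (adjoin k s) (D x)) ∧
      IsAlgebraic (adjoin k s) a ∧ IsAlgebraic (adjoin k s) b := by
  obtain ⟨s, hs, hDs, has⟩ := ha
  obtain ⟨t, ht, hDt, hbt⟩ := hb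
  have hl : ∀ y, IsAlgebraic (adjoin k s) y → IsAlgebraic (adjoin k (s ∪ t)) y := fun _ hy =>
    hy.tower_top_of_subalgebra_le (adjoin_mono Set.subset_union_left)
  have hr : ∀ y, IsAlgebraic (adjoin k t) y → IsAlgebraic (adjoin k (s ∪ t)) y := fun _ hy =>
    hy.tower_top_of_subalgebra_le (adjoin_mono Set.subset_union_right)
  exact ⟨s ∪ t, hs.union ht, fun x hx => hx.elim (hl _ <| hDs x ·) (hr _ <| hDt x ·), hl a has,
    hr b hbt⟩

variable [IsDomain A]

theorem isAlgebraic_derivation_of_mem_adjoin {s : Set A}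
    (hs : ∀ x ∈ s, IsAlgebraic (adjoin k s) (D x)) {a : A} (ha : a ∈ adjoin k s) :
    IsAlgebraic (adjoin k s) (D a) := by
  induction ha using adjoin_induction with
  | mem x hx => exact hs x hx
  | algebraMap r => simpa using isAlgebraic_zero
  | add x y _ _ hDx hDy => rw [map_add]; exact hDx.add hDy
  | mul x y hx hy hDx hDy =>
    have hx_alg : IsAlgebraic (adjoin k s) x := isAlgebraic_algebraMap (⟨x, hx⟩ : adjoin k s)
    have hy_alg : IsAlgebraic (adjoin k s) y := isAlgebraic_algebraMap (⟨y, hy⟩ : adjoin k s)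
    rw [D.leibniz]
    exact (hx_alg.mul hDy).add (hy_alg.mul hDx)

theorem isAlgebraic_derivation_aeval_sub {s : Set A}
    (hs : ∀ x ∈ s, IsAlgebraic (adjoin k s) (D x)) {a : A} (ha : IsAlgebraic (adjoin k s) a)
    (p : Polynomial (adjoin k s)) :
    IsAlgebraic (adjoin k s)
      (D (Polynomial.aeval a p) - Polynomial.aeval a p.derivative * D a) := by
  induction p using Polynomial.induction_on' with
  | add p q hp hq =>
    convert hp.add hq using 1
    simp only [map_add]
    ring
  | monomial n c =>
    convert (ha.pow n).mul (isAlgebraic_derivation_of_mem_adjoin hs c.2) using 1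
    simp only [Polynomial.derivative_monomial, Polynomial.aeval_monomial, Derivation.leibniz,
      Derivation.leibniz_pow, smul_eq_mul, nsmul_eq_mul, map_mul, map_natCast,
      Subalgebra.algebraMap_def, Algebra.algebraMap_self, RingHom.id_apply]
    ring

theorem isAlgebraic_derivation_of_generators [CharZero k] {s : Set A}
    (hs : ∀ x ∈ s, IsAlgebraic (adjoin k s) (D x)) {a : A} (ha : IsAlgebraic (adjoin k s) a) :
    IsAlgebraic (adjoin k s) (D a) := by
  have : CharZero (adjoin k s) := charZero_of_injective_algebraMap (algebraMap k _).injective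
  obtain ⟨p, hpa, hpa'⟩ := exists_aeval_eq_zero_and_aeval_derivative_ne_zero ha
  have hmul : IsAlgebraic (adjoin k s) (Polynomial.aeval a p.derivative * D a) := by
    simpa [hpa] using (isAlgebraic_derivation_aeval_sub hs ha p).neg
  have hp' : Polynomial.aeval a p.derivative ∈ Subalgebra.algebraicClosure (adjoin k s) A :=
    adjoin_le (Set.singleton_subset_iff.2 ha) (Polynomial.aeval_mem_adjoin_singleton _ a)
  exact IsAlgebraic.of_mul (mem_nonZeroDivisors_of_ne_zero hpa') hp' hmul

theorem exists_isAlgebraic_adjoin_image_Iio {x : ℕ → A} (hx : ¬ AlgebraicIndependent k x) :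
    ∃ n, IsAlgebraic (adjoin k (x '' Set.Iio n)) (x n) := by
  by_contra! htr
  have hind : ∀ n, AlgebraicIndepOn k x (Set.Iio n) := by
    intro n
    induction n with
    | zero =>
      rw [show Set.Iio 0 = (∅ : Set ℕ) by simp]
      exact algebraicIndependent_empty_type_iff.2 (algebraMap k A).injective
    | succ n ih =>
      rw [← Order.succ_eq_add_one, Order.Iio_succ_eq_insert]
      exact ih.insert (htr n)
  refine hx (algebraicIndependent_of_finite_type fun t ht => ?_)
  obtain ⟨n, hn⟩ := ht.bddAbove
  have htn : t ⊆ Set.Iio (n + 1) := fun i hi => Nat.lt_succ_of_le (hn hi)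
  exact (hind (n + 1)).comp (Set.inclusion htn) (Set.inclusion_injective htn)

namespace IsDiffAlgebraic

variable {a b : A}

theorem sub (ha : IsDiffAlgebraic D a) (hb : IsDiffAlgebraic D b) : IsDiffAlgebraic D (a - b) :=
  let ⟨s, hs, hDs, has, hbs⟩ := ha.exists_common hb
  ⟨s, hs, hDs, has.sub hbs⟩

theorem mul (ha : IsDiffAlgebraic D a) (hb : IsDiffAlgebraic D b) : IsDiffAlgebraic D (a * b) :=
  let ⟨s, hs, hDs, has, hbs⟩ := ha.exists_common hb
  ⟨s, hs, hDs, has.mul hbs⟩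

theorem of_derivation_eq_one {z : A} (hz : D z = 1) : IsDiffAlgebraic D z := by
  refine ⟨{z}, Set.finite_singleton z, ?_, ?_⟩
  · rintro _ rfl
    rw [hz]
    exact isAlgebraic_one
  · exact isAlgebraic_adjoin_of_mem (Set.mem_singleton z)

theorem not_algebraicIndependent_iterate [CharZero k] (ha : IsDiffAlgebraic D a) :
    ¬ AlgebraicIndependent k fun i : ℕ => D^[i] a := by
  obtain ⟨s, hs, hDs, has⟩ := ha
  intro hind
  set M := AlgebraicIndependent.matroid k A
  have hiter : ∀ i, IsAlgebraic (adjoin k s) (D^[i] a) := by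
    intro i
    induction i with
    | zero => exact has
    | succ i ih =>
      rw [Function.iterate_succ_apply']
      exact isAlgebraic_derivation_of_generators hDs ih
  have hsub : Set.range (fun i : ℕ => D^[i] a) ⊆ M.closure s := by
    rintro _ ⟨i, rfl⟩
    rw [AlgebraicIndependent.matroid_closure_eq]
    exact hiter i
  have hfin : (Set.range fun i : ℕ => D^[i] a).encard ≤ s.encard := calc
    _ = M.eRk (Set.range fun i : ℕ => D^[i] a) :=
      (Matroid.Indep.eRk_eq_encard (M := M) hind.coe_range).symm
    _ ≤ M.eRk (M.closure s) := M.eRk_mono hsub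
    _ = M.eRk s := M.eRk_closure_eq s
    _ ≤ s.encard := M.eRk_le_encard s
  exact (Set.infinite_range_of_injective hind.injective) (Set.finite_of_encard_le_coe
    (hfin.trans_eq hs.encard_eq_coe))

end IsDiffAlgebraic

/-- The family `z, a, D a, D² a, …`. -/
def jet (D : Derivation k A A) (z a : A) : ℕ → A
  | 0 => z
  | i + 1 => D^[i] a

theorem isDiffAlgebraic_of_not_algebraicIndependent_jet [CharZero k] {z a : A} (hz : D z = 1)
    (h : ¬ AlgebraicIndependent k (jet D z a)) : IsDiffAlgebraic D a := by
  obtain ⟨n, hn⟩ := exists_isAlgebraic_adjoin_image_Iio h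
  obtain _ | n := n
  · rw [show Set.Iio 0 = (∅ : Set ℕ) by simp, Set.image_empty, adjoin_empty] at hn
    exact absurd (hn.restrictScalars k) (transcendental_of_derivation_eq_one hz)
  have hle : ∀ i ≤ n + 1, IsAlgebraic (adjoin k (jet D z a '' Set.Iio (n + 1))) (jet D z a i) := by
    intro i hi
    obtain rfl | hlt := hi.eq_or_lt
    · exact hn
    · exact isAlgebraic_adjoin_of_mem (Set.mem_image_of_mem _ hlt)
  refine ⟨_, (Set.finite_Iio (n + 1)).image _, ?_, hle 1 (by omega)⟩
  rintro _ ⟨i, hi, rfl⟩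
  obtain _ | i := i
  · simpa only [jet, hz] using isAlgebraic_one
  · have hDi : D (jet D z a (i + 1)) = jet D z a (i + 2) :=
      (Function.iterate_succ_apply' D i a).symm
    rw [hDi]
    exact hle (i + 2) hi

end DifferentialAlgebra

/-! ### Taylor series -/

section TaylorSeries

variable {𝕜 : Type*} [NontriviallyNormedField 𝕜] {c : 𝕜} {f g : 𝕜 → 𝕜}

/-- The Taylor series of `f` at `c` as a formal power series. It makes analytic germs at `c`
elements of the differential ring `𝕜⟦X⟧`; its coefficients are junk if `f` is not smooth at `c`. -/
noncomputable def taylorSeries (c : 𝕜) (f : 𝕜 → 𝕜) : PowerSeries 𝕜 :=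
  PowerSeries.mk fun n => iteratedDeriv n f c / n.factorial

theorem taylorSeries_congr (h : f =ᶠ[𝓝 c] g) : taylorSeries c f = taylorSeries c g := by
  ext n
  simp only [taylorSeries, PowerSeries.coeff_mk, h.iteratedDeriv_eq n]

theorem taylorSeries_const (c a : 𝕜) : taylorSeries c (fun _ => a) = PowerSeries.C a := by
  ext n
  simp only [taylorSeries, PowerSeries.coeff_mk, iteratedDeriv_const, PowerSeries.coeff_C]
  split_ifs with h <;> simp [h]

theorem taylorSeries_comp_add_const (c s : 𝕜) (f : 𝕜 → 𝕜) :
    taylorSeries c (fun z => f (z + s)) = taylorSeries (c + s) f := by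
  ext n
  simp only [taylorSeries, PowerSeries.coeff_mk, iteratedDeriv_comp_add_const]

theorem derivative_taylorSeries [CharZero 𝕜] (c : 𝕜) (f : 𝕜 → 𝕜) :
    PowerSeries.derivative 𝕜 (taylorSeries c f) = taylorSeries c (deriv f) := by
  ext n
  have hn : (n.factorial : 𝕜) ≠ 0 := Nat.cast_ne_zero.2 n.factorial_ne_zero
  have hn' : (n : 𝕜) + 1 ≠ 0 := Nat.cast_add_one_ne_zero n
  simp only [taylorSeries, PowerSeries.coeff_mk, PowerSeries.coeff_derivative,
    ← iteratedDeriv_succ', Nat.factorial_succ, Nat.cast_mul, Nat.cast_succ]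
  field_simp

theorem derivative_taylorSeries_id [CharZero 𝕜] (c : 𝕜) :
    PowerSeries.derivative 𝕜 (taylorSeries c id) = 1 := by
  rw [derivative_taylorSeries, deriv_id', taylorSeries_const, map_one]

theorem iterate_derivative_taylorSeries [CharZero 𝕜] (c : 𝕜) (f : 𝕜 → 𝕜) (n : ℕ) :
    (PowerSeries.derivative 𝕜)^[n] (taylorSeries c f) = taylorSeries c (iteratedDeriv n f) := by
  induction n with
  | zero => simp
  | succ n ih => rw [Function.iterate_succ_apply', ih, derivative_taylorSeries, iteratedDeriv_succ]

variable [CompleteSpace 𝕜]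

theorem taylorSeries_add (hf : AnalyticAt 𝕜 f c) (hg : AnalyticAt 𝕜 g c) :
    taylorSeries c (fun z => f z + g z) = taylorSeries c f + taylorSeries c g := by
  ext n
  simp only [taylorSeries, PowerSeries.coeff_mk, map_add,
    iteratedDeriv_fun_add hf.contDiffAt hg.contDiffAt, add_div]

theorem taylorSeries_mul [CharZero 𝕜] (hf : AnalyticAt 𝕜 f c) (hg : AnalyticAt 𝕜 g c) :
    taylorSeries c (fun z => f z * g z) = taylorSeries c f * taylorSeries c g := by
  ext n
  have hfac (m : ℕ) : (m.factorial : 𝕜) ≠ 0 := Nat.cast_ne_zero.2 m.factorial_ne_zero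
  simp only [taylorSeries, PowerSeries.coeff_mk, PowerSeries.coeff_mul,
    Finset.Nat.sum_antidiagonal_eq_sum_range_succ_mk,
    iteratedDeriv_fun_mul hf.contDiffAt hg.contDiffAt, Finset.sum_div]
  refine Finset.sum_congr rfl fun i hi => ?_
  rw [Nat.cast_choose 𝕜 (Nat.lt_succ_iff.1 (Finset.mem_range.1 hi))]
  field_simp [hfac]

theorem eventually_eq_zero_of_taylorSeries_eq_zero [CharZero 𝕜] (hf : AnalyticAt 𝕜 f c)
    (h : taylorSeries c f = 0) : ∀ᶠ z in 𝓝 c, f z = 0 := by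
  have hcoeff : (fun n ↦ iteratedDeriv n f c / (n.factorial : 𝕜)) = 0 := by
    funext n
    simpa only [taylorSeries, PowerSeries.coeff_mk, map_zero, Pi.zero_apply] using
      congrArg (PowerSeries.coeff n) h
  have hseries := hf.hasFPowerSeriesAt
  rw [hcoeff, FormalMultilinearSeries.ofScalars_series_eq_zero_of_scalar_zero] at hseries
  exact hseries.eventually_eq_zero

theorem analyticAt_iteratedDeriv (hf : AnalyticAt 𝕜 f c) (n : ℕ) :
    AnalyticAt 𝕜 (iteratedDeriv n f) c := by
  rw [iteratedDeriv_eq_iterate]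
  exact hf.iterated_deriv n

theorem taylorSeries_aeval [CharZero 𝕜] {ι : Type*} {x : ι → 𝕜 → 𝕜}
    (hx : ∀ i, AnalyticAt 𝕜 (x i) c) (P : MvPolynomial ι 𝕜) :
    taylorSeries c (fun z => MvPolynomial.aeval (x · z) P) =
      MvPolynomial.aeval (fun i => taylorSeries c (x i)) P := by
  have han (P : MvPolynomial ι 𝕜) : AnalyticAt 𝕜 (fun z => MvPolynomial.aeval (x · z) P) c :=
    AnalyticAt.aeval_mvPolynomial hx P
  induction P using MvPolynomial.induction_on with
  | C a => simpa using taylorSeries_const c a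
  | add p q hp hq => simp only [map_add, taylorSeries_add (han p) (han q), hp, hq]
  | mul_X p i hp =>
    simp only [map_mul, MvPolynomial.aeval_X, taylorSeries_mul (han p) (hx i), hp]

end TaylorSeries

theorem DifferentiallyAlgebraic.isDiffAlgebraic_taylorSeries {f : ℂ → ℂ} {c : ℂ}
    (h : DifferentiallyAlgebraic f) (hf : AnalyticAt ℂ f c) :
    IsDiffAlgebraic (PowerSeries.derivative ℂ) (taylorSeries c f) := by
  obtain ⟨n, P, hP0, hP⟩ := h
  refine isDiffAlgebraic_of_not_algebraicIndependent_jet (derivative_taylorSeries_id c) ?_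
  intro hind
  let x : ℕ → ℂ → ℂ := fun i z => if i = 0 then z else iteratedDeriv (i - 1) f z
  have hjet (i : ℕ) :
      jet (PowerSeries.derivative ℂ) (taylorSeries c id) (taylorSeries c f) i =
        taylorSeries c (x i) := by
    obtain _ | i := i
    · rfl
    · exact iterate_derivative_taylorSeries c f i
  have hx (i : ℕ) : AnalyticAt ℂ (x i) c := by
    obtain _ | i := i
    · exact analyticAt_id
    · exact analyticAt_iteratedDeriv hf i
  refine hP0 (algebraicIndependent_iff.1 (hind.comp _ Fin.val_injective) P ?_)
  have hvanish : (fun z => MvPolynomial.aeval (fun i : Fin (n + 2) => x i z) P) =ᶠ[𝓝 c] 0 :=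
    hf.eventually_analyticAt.mono hP
  rw [Function.comp_def, funext fun i : Fin (n + 2) => hjet i,
    ← taylorSeries_aeval fun i : Fin (n + 2) => hx i, taylorSeries_congr hvanish]
  exact (taylorSeries_const c 0).trans (map_zero _)

/-! ### Triangular substitutions -/

section TriangularSubstitution

open MvPolynomial

variable {σ R R' : Type*} [CommRing R] [CommRing R']

theorem X_dvd_iff_forall_coeff_eq_zero {i : σ} {P : MvPolynomial σ R} :
    X i ∣ P ↔ ∀ d : σ →₀ ℕ, d i = 0 → coeff d P = 0 := by
  rw [X_dvd_iff_modMonomial_eq_zero, MvPolynomial.ext_iff]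
  refine forall_congr' fun d => ?_
  have hd : d i = 0 ↔ ¬ Finsupp.single i 1 ≤ d := by
    rw [Finsupp.single_le_iff, Nat.one_le_iff_ne_zero, not_not]
  by_cases h : d i = 0
  · simp only [h, forall_const, coeff_modMonomial_of_not_le P (hd.1 h), coeff_zero]
  · simp only [h, IsEmpty.forall_iff, coeff_modMonomial_of_le P (not_not.1 (mt hd.2 h)), coeff_zero]

theorem X_dvd_of_X_dvd_map_evalRingHom [IsDomain R] {i : σ} {P : MvPolynomial σ (Polynomial R)}
    {s : Set R} (hs : s.Infinite) (h : ∀ x ∈ s, X i ∣ map (Polynomial.evalRingHom x) P) :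
    X i ∣ P := by
  rw [X_dvd_iff_forall_coeff_eq_zero]
  intro d hd
  refine Polynomial.eq_zero_of_infinite_isRoot _ (hs.mono fun x hx => ?_)
  have hcoeff := X_dvd_iff_forall_coeff_eq_zero.1 (h x hx) d hd
  rwa [coeff_map] at hcoeff

/-- A ring homomorphism between polynomial rings is triangular for a monomial order if it restricts
to `ρ` on the coefficients and sends each variable `X i` to a polynomial with leading monomial
`X i`. -/
structure IsTriangular (m : MonomialOrder σ) (ρ : R →+* R')
    (Φ : MvPolynomial σ R →+* MvPolynomial σ R') : Prop where
  map_C : ∀ a, Φ (C a) = C (ρ a)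
  degree_map_X : ∀ i, m.degree (Φ (X i)) = Finsupp.single i 1

namespace IsTriangular

variable {m : MonomialOrder σ} {ρ : R →+* R'} {Φ : MvPolynomial σ R →+* MvPolynomial σ R'}

theorem map_monomial (hΦ : IsTriangular m ρ Φ) (d : σ →₀ ℕ) (a : R) :
    Φ (monomial d a) = C (ρ a) * d.prod fun i k => Φ (X i) ^ k := by
  rw [monomial_eq, map_mul, hΦ.map_C, map_finsuppProd]
  simp only [map_pow]

theorem map_X_ne_zero (hΦ : IsTriangular m ρ Φ) (i : σ) : Φ (X i) ≠ 0 := by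
  intro h
  have hdeg := hΦ.degree_map_X i
  rw [h, m.degree_zero] at hdeg
  exact Finsupp.single_ne_zero.2 one_ne_zero hdeg.symm

variable [IsDomain R']

theorem degree_prod_map_X_pow (hΦ : IsTriangular m ρ Φ) (d : σ →₀ ℕ) :
    m.degree (d.prod fun i k => Φ (X i) ^ k) = d := by
  rw [Finsupp.prod, m.degree_prod fun i _ => pow_ne_zero _ (hΦ.map_X_ne_zero i)]
  simp only [m.degree_pow, hΦ.degree_map_X, Finsupp.smul_single_one]
  exact d.sum_single

theorem leadingCoeff_prod_map_X_pow (hΦ : IsTriangular m ρ Φ) (d : σ →₀ ℕ) :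
    m.leadingCoeff (d.prod fun i k => Φ (X i) ^ k) =
      d.prod fun i k => m.leadingCoeff (Φ (X i)) ^ k := by
  rw [Finsupp.prod, m.leadingCoeff_prod_of_regular]
  · simp only [m.leadingCoeff_pow]
    rfl
  · intro i _
    rw [m.leadingCoeff_pow]
    exact IsRegular.of_ne_zero
      (pow_ne_zero _ (m.leadingCoeff_ne_zero_iff.2 (hΦ.map_X_ne_zero i)))

theorem degree_map_monomial_le (hΦ : IsTriangular m ρ Φ) (d : σ →₀ ℕ) (a : R) :
    m.toSyn (m.degree (Φ (monomial d a))) ≤ m.toSyn d := by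
  rw [hΦ.map_monomial]
  refine m.degree_mul_le.trans ?_
  rw [m.degree_C, zero_add, hΦ.degree_prod_map_X_pow]

theorem degree_map_le (hΦ : IsTriangular m ρ Φ) (P : MvPolynomial σ R) :
    m.toSyn (m.degree (Φ P)) ≤ m.toSyn (m.degree P) := by
  conv_lhs => rw [P.as_sum, map_sum]
  refine m.degree_sum_le.trans (Finset.sup_le fun d hd => ?_)
  exact (hΦ.degree_map_monomial_le d _).trans (m.le_degree hd)

theorem coeff_degree_map (hΦ : IsTriangular m ρ Φ) (P : MvPolynomial σ R) :
    coeff (m.degree P) (Φ P) =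
      ρ (m.leadingCoeff P) * (m.degree P).prod fun i k => m.leadingCoeff (Φ (X i)) ^ k := by
  have htop : coeff (m.degree P) (Φ (monomial (m.degree P) (m.leadingCoeff P))) =
      ρ (m.leadingCoeff P) * (m.degree P).prod fun i k => m.leadingCoeff (Φ (X i)) ^ k := by
    rw [hΦ.map_monomial, coeff_C_mul, ← hΦ.leadingCoeff_prod_map_X_pow,
      MonomialOrder.leadingCoeff, MonomialOrder.leadingCoeff, hΦ.degree_prod_map_X_pow]
  have hsum : Φ P = ∑ d ∈ P.support, Φ (monomial d (coeff d P)) := by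
    conv_lhs => rw [P.as_sum, map_sum]
  rw [← htop, hsum, coeff_sum]
  refine Finset.sum_eq_single (m.degree P) (fun d hd hne => ?_) fun hP => ?_
  · refine m.coeff_eq_zero_of_lt ((hΦ.degree_map_monomial_le d _).trans_lt ?_)
    exact (m.le_degree hd).lt_of_ne fun h => hne (m.toSyn.injective h)
  · rw [notMem_support_iff.1 hP, monomial_zero, map_zero, coeff_zero]

theorem coeff_degree_map_ne_zero (hΦ : IsTriangular m ρ Φ) (hρ : Function.Injective ρ)
    {P : MvPolynomial σ R} (hP : P ≠ 0) : coeff (m.degree P) (Φ P) ≠ 0 := by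
  rw [hΦ.coeff_degree_map]
  refine mul_ne_zero ?_ (Finset.prod_ne_zero_iff.2 fun i _ => pow_ne_zero _ ?_)
  · rw [map_ne_zero_iff ρ hρ]
    exact m.leadingCoeff_ne_zero_iff.2 hP
  · exact m.leadingCoeff_ne_zero_iff.2 (hΦ.map_X_ne_zero i)

theorem degree_map (hΦ : IsTriangular m ρ Φ) (hρ : Function.Injective ρ) (P : MvPolynomial σ R) :
    m.degree (Φ P) = m.degree P := by
  by_cases hP : P = 0
  · simp [hP]
  · exact m.toSyn.injective <| (hΦ.degree_map_le P).antisymm <|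
      m.le_degree (mem_support_iff.2 (hΦ.coeff_degree_map_ne_zero hρ hP))

theorem leadingCoeff_map (hΦ : IsTriangular m ρ Φ) (hρ : Function.Injective ρ)
    (P : MvPolynomial σ R) :
    m.leadingCoeff (Φ P) =
      ρ (m.leadingCoeff P) * (m.degree P).prod fun i k => m.leadingCoeff (Φ (X i)) ^ k := by
  rw [← hΦ.coeff_degree_map, MonomialOrder.leadingCoeff, hΦ.degree_map hρ]

theorem injective (hΦ : IsTriangular m ρ Φ) (hρ : Function.Injective ρ) :
    Function.Injective Φ := by
  rw [injective_iff_map_eq_zero]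
  intro P hP
  by_contra hP0
  exact hΦ.coeff_degree_map_ne_zero hρ hP0 (by rw [hP, coeff_zero])

theorem X_dvd_of_X_dvd_map (hΦ : IsTriangular m ρ Φ) (hρ : Function.Injective ρ) {i : σ}
    (hi : X i ∣ Φ (X i)) {P : MvPolynomial σ R} (hP : X i ∣ Φ P) : X i ∣ P := by
  set Q := P.modMonomial (Finsupp.single i 1) with hQ
  have hQi : X i ∣ Φ Q := by
    rw [← divMonomial_add_modMonomial_single P i, map_add, map_mul] at hP
    exact (dvd_add_right (hi.mul_right _)).1 hP
  rw [X_dvd_iff_modMonomial_eq_zero, ← hQ]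
  by_contra hQ0
  have hdeg : m.degree Q i = 0 := by
    by_contra hne
    refine mem_support_iff.1 (m.degree_mem_support hQ0) (coeff_modMonomial_of_le P ?_)
    exact Finsupp.single_le_iff.2 (Nat.one_le_iff_ne_zero.2 hne)
  exact hΦ.coeff_degree_map_ne_zero hρ hQ0 (X_dvd_iff_forall_coeff_eq_zero.1 hQi _ hdeg)

end IsTriangular

end TriangularSubstitution

/-! ### Minimal elements of an ideal -/

section MinimalElements

open MvPolynomial

variable {σ K : Type*} [Field K] {m : MonomialOrder σ}
  {I : Ideal (MvPolynomial σ (Polynomial K))} {P : MvPolynomial σ (Polynomial K)}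

/-- `P` is a nonzero element of `I` of least degree for the monomial order and, among those, with
leading coefficient of least degree as a univariate polynomial. -/
structure IsMinimalIn (m : MonomialOrder σ) (I : Ideal (MvPolynomial σ (Polynomial K)))
    (P : MvPolynomial σ (Polynomial K)) : Prop where
  mem : P ∈ I
  ne_zero : P ≠ 0
  degree_le : ∀ Q ∈ I, Q ≠ 0 → m.toSyn (m.degree P) ≤ m.toSyn (m.degree Q)
  natDegree_leadingCoeff_le : ∀ Q ∈ I, Q ≠ 0 → m.degree Q = m.degree P →
    (m.leadingCoeff P).natDegree ≤ (m.leadingCoeff Q).natDegree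

theorem exists_isMinimalIn (m : MonomialOrder σ) (hI : I ≠ ⊥) : ∃ P, IsMinimalIn m I P := by
  let size : MvPolynomial σ (Polynomial K) → m.syn ×ₗ ℕ := fun Q =>
    toLex (m.toSyn (m.degree Q), (m.leadingCoeff Q).natDegree)
  obtain ⟨P, ⟨hPI, hP0⟩, hmin⟩ := WellFounded.has_min (InvImage.wf size wellFounded_lt)
    {Q | Q ∈ I ∧ Q ≠ 0} (Submodule.exists_mem_ne_zero_of_ne_bot hI)
  have hle : ∀ Q ∈ I, Q ≠ 0 → size P ≤ size Q := fun Q hQ hQ0 => not_lt.1 (hmin Q ⟨hQ, hQ0⟩)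
  refine ⟨P, hPI, hP0, fun Q hQ hQ0 => Prod.Lex.monotone_fst_ofLex (hle Q hQ hQ0), ?_⟩
  intro Q hQ hQ0 hdeg
  have hsize := hle Q hQ hQ0
  simpa only [size, hdeg, Prod.Lex.toLex_le_toLex, lt_irrefl, true_and, false_or] using hsize

namespace IsMinimalIn

theorem exists_eq_C_mul (hP : IsMinimalIn m I P) {Q : MvPolynomial σ (Polynomial K)} (hQ : Q ∈ I)
    (hdeg : m.degree Q = m.degree P) : ∃ q, Q = C q * P := by
  set a := m.leadingCoeff P
  set b := m.leadingCoeff Q with hb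
  have ha0 : a ≠ 0 := m.leadingCoeff_ne_zero_iff.2 hP.ne_zero
  refine ⟨b / a, sub_eq_zero.1 (not_not.1 fun hR0 => ?_)⟩
  set R := Q - C (b / a) * P
  have hRI : R ∈ I := I.sub_mem hQ (I.mul_mem_left _ hP.mem)
  have hRcoeff : coeff (m.degree P) R = b % a := by
    rw [EuclideanDomain.mod_eq_sub_mul_div, mul_comm a, coeff_sub, coeff_C_mul]
    simp only [a, hb, MonomialOrder.leadingCoeff, hdeg]
  have hRdeg : m.degree R = m.degree P := by
    refine m.toSyn.injective (le_antisymm ?_ (hP.degree_le R hRI hR0))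
    refine m.degree_sub_le.trans (sup_le (by rw [hdeg]) (m.degree_mul_le.trans ?_))
    rw [m.degree_C, zero_add]
  have hRlead : m.leadingCoeff R = b % a := by
    rw [← hRcoeff, MonomialOrder.leadingCoeff, hRdeg]
  have hmod0 : b % a ≠ 0 := hRlead ▸ m.leadingCoeff_ne_zero_iff.2 hR0
  have hle := hP.natDegree_leadingCoeff_le R hRI hR0 hRdeg
  rw [hRlead] at hle
  exact hle.not_gt (Polynomial.natDegree_lt_natDegree hmod0 (EuclideanDomain.mod_lt b ha0))

theorem not_X_dvd [I.IsPrime] (hP : IsMinimalIn m I P) {i : σ} (hi : X i ∉ I) : ¬ X i ∣ P := by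
  rintro ⟨Q, rfl⟩
  have hQ0 : Q ≠ 0 := right_ne_zero_of_mul hP.ne_zero
  have hQI : Q ∈ I := (Ideal.IsPrime.mem_or_mem ‹_› hP.mem).resolve_left hi
  refine (hP.degree_le Q hQI hQ0).not_gt ?_
  rw [m.degree_mul (X_ne_zero i) hQ0, map_add]
  refine lt_add_of_pos_left _ (m.toSyn_lt_iff_ne_zero.2 ?_)
  simp [m.degree_X]

theorem not_C_dvd [I.IsPrime] (hP : IsMinimalIn m I P) {p : Polynomial K} (hp : C p ∉ I)
    (hdeg : p.natDegree ≠ 0) : ¬ C p ∣ P := by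
  rintro ⟨Q, rfl⟩
  have hQ0 : Q ≠ 0 := right_ne_zero_of_mul hP.ne_zero
  have hp0 : p ≠ 0 := by
    rintro rfl
    exact hdeg Polynomial.natDegree_zero
  have hQI : Q ∈ I := (Ideal.IsPrime.mem_or_mem ‹_› hP.mem).resolve_left hp
  have hQdeg : m.degree Q = m.degree (C p * Q) := by
    rw [m.degree_mul (C_ne_zero.2 hp0) hQ0, m.degree_C, zero_add]
  have hle := hP.natDegree_leadingCoeff_le Q hQI hQ0 hQdeg
  rw [m.leadingCoeff_mul, m.leadingCoeff_C,
    Polynomial.natDegree_mul hp0 (m.leadingCoeff_ne_zero_iff.2 hQ0)] at hle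
  omega

end IsMinimalIn

end MinimalElements

/-! ### The shift on differential polynomials -/

section GammaShift

open MvPolynomial OrderDual
open scoped Polynomial

/-- The substitution `Y_i ↦ c Y_i - i Y_{i-1}` on polynomials in `Y_0, Y_1, …`, acting by `ρ` on
coefficients. If `Y_i` stands for the `i`-th derivative of `g` and `g (z + 1) = -z g z`, the case
`c = -z` describes the shift of `Y_i`. The indices are dualised so that `Y_0 < Y_1 < …` in
`MonomialOrder.lex`; at `i = 0` the truncated index `i - 1` carries the coefficient `0`. -/
noncomputable def derivShift {R R' : Type*} [CommRing R] [CommRing R'] (ρ : R →+* R') (c : R') :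
    MvPolynomial ℕᵒᵈ R →+* MvPolynomial ℕᵒᵈ R' :=
  eval₂Hom (C.comp ρ) fun i => C c * X i - C ((ofDual i : ℕ) : R') * X (toDual (ofDual i - 1))

section DerivShift

variable {R R' : Type*} [CommRing R] [CommRing R'] {ρ : R →+* R'} {c : R'}

theorem derivShift_C (a : R) : derivShift ρ c (C a) = C (ρ a) :=
  eval₂Hom_C _ _ a

theorem derivShift_X (i : ℕᵒᵈ) : derivShift ρ c (X i) =
    C c * X i - C ((ofDual i : ℕ) : R') * X (toDual (ofDual i - 1)) :=
  eval₂Hom_X' _ _ i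

theorem X_zero_dvd_derivShift_X_zero :
    (X (toDual 0) : MvPolynomial ℕᵒᵈ R') ∣ derivShift ρ c (X (toDual 0)) := by
  rw [derivShift_X, ofDual_toDual, Nat.cast_zero, C_0, zero_mul, sub_zero]
  exact dvd_mul_left _ _

theorem degree_derivShift_X_tail_lt (hc : c ≠ 0) (i : ℕᵒᵈ) :
    MonomialOrder.lex.toSyn (MonomialOrder.lex.degree
      (C ((ofDual i : ℕ) : R') * X (toDual (ofDual i - 1)) : MvPolynomial ℕᵒᵈ R')) <
    MonomialOrder.lex.toSyn (MonomialOrder.lex.degree (C c * X i : MvPolynomial ℕᵒᵈ R')) := by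
  classical
  rw [C_mul_X_eq_monomial, C_mul_X_eq_monomial, MonomialOrder.degree_monomial (c := c), if_neg hc]
  obtain hi | hi := eq_or_ne (ofDual i : ℕ) 0
  · rw [hi, Nat.cast_zero, monomial_zero, MonomialOrder.degree_zero, map_zero,
      MonomialOrder.toSyn_lt_iff_ne_zero]
    simp
  · refine (MonomialOrder.degree_monomial_le _).trans_lt ?_
    rw [MonomialOrder.lex_lt_iff, Finsupp.Lex.single_lt_iff, ← ofDual_lt_ofDual]
    exact Nat.sub_one_lt hi

theorem degree_derivShift_X (hc : c ≠ 0) (i : ℕᵒᵈ) :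
    MonomialOrder.lex.degree (derivShift ρ c (X i)) = Finsupp.single i 1 := by
  classical
  rw [derivShift_X, MonomialOrder.degree_sub_of_lt (degree_derivShift_X_tail_lt hc i),
    C_mul_X_eq_monomial, MonomialOrder.degree_monomial, if_neg hc]

theorem leadingCoeff_derivShift_X (hc : c ≠ 0) (i : ℕᵒᵈ) :
    MonomialOrder.lex.leadingCoeff (derivShift ρ c (X i)) = c := by
  rw [derivShift_X, MonomialOrder.leadingCoeff_sub_of_lt (degree_derivShift_X_tail_lt hc i),
    C_mul_X_eq_monomial, MonomialOrder.leadingCoeff_monomial]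

theorem isTriangular_derivShift (hc : c ≠ 0) :
    IsTriangular MonomialOrder.lex ρ (derivShift ρ c) :=
  ⟨derivShift_C, degree_derivShift_X hc⟩

end DerivShift

variable {K : Type*} [Field K]

-- Modulo `Y_0`, the substitution `Y_i ↦ -i Y_{i-1}` is inverted by `Y_i ↦ -Y_{i+1} / (i + 1)`.
theorem X_zero_dvd_of_derivShift_zero_eq_zero [CharZero K] {P : MvPolynomial ℕᵒᵈ K}
    (h : derivShift (RingHom.id K) 0 P = 0) : X (toDual 0) ∣ P := by
  let mk := Ideal.Quotient.mk (Ideal.span {(X (toDual 0) : MvPolynomial ℕᵒᵈ K)})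
  let raise : MvPolynomial ℕᵒᵈ K →+* MvPolynomial ℕᵒᵈ K :=
    eval₂Hom C fun i => C (-((ofDual i : ℕ) + 1 : K)⁻¹) * X (toDual (ofDual i + 1))
  have hinv : (mk.comp raise).comp (derivShift (RingHom.id K) 0) = mk := by
    refine MvPolynomial.ringHom_ext (fun a => ?_) fun i => ?_
    · simp only [RingHom.comp_apply, derivShift_C, RingHom.id_apply, raise, eval₂Hom_C]
    · simp only [RingHom.comp_apply, derivShift_X, C_0, zero_mul, zero_sub]
      obtain ⟨_ | j, rfl⟩ := toDual.surjective i
      · have hX : mk (X (toDual 0)) = 0 :=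
          Ideal.Quotient.eq_zero_iff_mem.2 (Ideal.mem_span_singleton_self _)
        rw [ofDual_toDual, Nat.cast_zero, C_0, zero_mul, neg_zero, map_zero raise, map_zero mk, hX]
      · have hj : (j + 1 : K) ≠ 0 := Nat.cast_add_one_ne_zero j
        have hC : (C (j + 1 : K) * C (j + 1 : K)⁻¹ : MvPolynomial ℕᵒᵈ K) = 1 := by
          rw [← C_mul, mul_inv_cancel₀ hj, C_1]
        congr 1
        simp only [raise, ofDual_toDual, Nat.add_sub_cancel, Nat.cast_add_one, map_neg, map_mul,
          eval₂Hom_C, eval₂Hom_X']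
        linear_combination X (toDual (j + 1)) * hC
  rw [← Ideal.mem_span_singleton, ← Ideal.Quotient.eq_zero_iff_mem]
  calc mk P = mk (raise (derivShift (RingHom.id K) 0 P)) := (RingHom.congr_fun hinv P).symm
    _ = 0 := by rw [h, map_zero raise, map_zero mk]

/-- The operator on differential polynomials with coefficients in `K[z]` that corresponds to
`z ↦ z + 1` for solutions of `g (z + 1) = -z g z`. -/
noncomputable def gammaShift (K : Type*) [Field K] :
    MvPolynomial ℕᵒᵈ K[X] →+* MvPolynomial ℕᵒᵈ K[X] :=
  derivShift (Polynomial.taylorAlgHom (1 : K) : K[X] →+* K[X]) (-Polynomial.X)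

theorem isTriangular_gammaShift :
    IsTriangular MonomialOrder.lex (Polynomial.taylorAlgHom (1 : K) : K[X] →+* K[X])
      (gammaShift K) :=
  isTriangular_derivShift (neg_ne_zero.2 Polynomial.X_ne_zero)

theorem degree_gammaShift (P : MvPolynomial ℕᵒᵈ K[X]) :
    MonomialOrder.lex.degree (gammaShift K P) = MonomialOrder.lex.degree P :=
  isTriangular_gammaShift.degree_map (Polynomial.taylor_injective 1) P

theorem leadingCoeff_gammaShift (P : MvPolynomial ℕᵒᵈ K[X]) :
    MonomialOrder.lex.leadingCoeff (gammaShift K P) =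
      Polynomial.taylor 1 (MonomialOrder.lex.leadingCoeff P) *
        (-Polynomial.X) ^ (MonomialOrder.lex.degree P).degree := by
  have hX : (-Polynomial.X : K[X]) ≠ 0 := neg_ne_zero.2 Polynomial.X_ne_zero
  rw [isTriangular_gammaShift.leadingCoeff_map (Polynomial.taylor_injective 1)]
  simp only [gammaShift, leadingCoeff_derivShift_X hX, Finsupp.prod, Finset.prod_pow_eq_pow_sum,
    Finsupp.degree_apply]
  rfl

theorem map_evalRingHom_gammaShift (α : K) (P : MvPolynomial ℕᵒᵈ K[X]) :
    map (Polynomial.evalRingHom α) (gammaShift K P) =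
      derivShift (RingHom.id K) (-α) (map (Polynomial.evalRingHom (α + 1)) P) := by
  have hcomp : (map (Polynomial.evalRingHom α)).comp (gammaShift K) =
      (derivShift (RingHom.id K) (-α)).comp (map (Polynomial.evalRingHom (α + 1))) := by
    refine MvPolynomial.ringHom_ext (fun p => ?_) fun i => ?_
    · simp [gammaShift, derivShift_C, Polynomial.taylor_eval]
    · simp [gammaShift, derivShift_X]
  exact RingHom.congr_fun hcomp P

section Eigenvector

variable {P : MvPolynomial ℕᵒᵈ K[X]} {q : K[X]}

theorem natDegree_of_gammaShift_eq_C_mul (hP : P ≠ 0) (h : gammaShift K P = C q * P) :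
    q.natDegree = (MonomialOrder.lex.degree P).degree := by
  set a := MonomialOrder.lex.leadingCoeff P
  have ha0 : a ≠ 0 := MonomialOrder.leadingCoeff_ne_zero_iff.2 hP
  have hX : (-Polynomial.X : K[X]) ≠ 0 := neg_ne_zero.2 Polynomial.X_ne_zero
  have hlead : Polynomial.taylor 1 a * (-Polynomial.X) ^ (MonomialOrder.lex.degree P).degree =
      q * a := by
    rw [← leadingCoeff_gammaShift, h, MonomialOrder.leadingCoeff_mul,
      MonomialOrder.leadingCoeff_C]
  have hdeg := congrArg Polynomial.natDegree hlead
  have hta0 : Polynomial.taylor 1 a ≠ 0 := mt (Polynomial.taylor_eq_zero 1 a).1 ha0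
  have hq0 : q ≠ 0 := left_ne_zero_of_mul (hlead ▸ mul_ne_zero hta0 (pow_ne_zero _ hX))
  rw [Polynomial.natDegree_mul hta0 (pow_ne_zero _ hX), Polynomial.natDegree_taylor,
    Polynomial.natDegree_pow, Polynomial.natDegree_neg, Polynomial.natDegree_X,
    Polynomial.natDegree_mul hq0 ha0] at hdeg
  omega

theorem derivShift_map_evalRingHom_of_gammaShift_eq (h : gammaShift K P = C q * P) (α : K) :
    derivShift (RingHom.id K) (-α) (map (Polynomial.evalRingHom (α + 1)) P) =
      C (q.eval α) * map (Polynomial.evalRingHom α) P := by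
  rw [← map_evalRingHom_gammaShift, h, map_mul, map_C, Polynomial.coe_evalRingHom]

theorem C_X_sub_C_dvd_of_gammaShift_eq (h : gammaShift K P = C q * P) {α : K} (hα : q.IsRoot α)
    (hα0 : α ≠ 0) : C (Polynomial.X - Polynomial.C (α + 1)) ∣ P := by
  have hzero := derivShift_map_evalRingHom_of_gammaShift_eq h α
  rw [hα.eq_zero, map_zero, zero_mul] at hzero
  have hmap := (injective_iff_map_eq_zero _).1
    ((isTriangular_derivShift (neg_ne_zero.2 hα0)).injective Function.injective_id) _ hzero
  rw [C_dvd_iff_dvd_coeff]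
  intro d
  rw [Polynomial.dvd_iff_isRoot]
  have hcoeff := congrArg (coeff d) hmap
  rwa [coeff_map, coeff_zero] at hcoeff

theorem X_zero_dvd_map_evalRingHom_of_gammaShift_eq [CharZero K] (h : gammaShift K P = C q * P)
    (hq : q.IsRoot 0) (n : ℕ) :
    X (toDual 0) ∣ map (Polynomial.evalRingHom ((n : K) + 1)) P := by
  induction n with
  | zero =>
    have hzero := derivShift_map_evalRingHom_of_gammaShift_eq h 0
    rw [hq.eq_zero, map_zero, zero_mul, neg_zero] at hzero
    rw [Nat.cast_zero]
    exact X_zero_dvd_of_derivShift_zero_eq_zero hzero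
  | succ n ih =>
    have hn : -((n : K) + 1) ≠ 0 := neg_ne_zero.2 (Nat.cast_add_one_ne_zero n)
    rw [Nat.cast_succ]
    refine (isTriangular_derivShift (ρ := RingHom.id K) hn).X_dvd_of_X_dvd_map
      Function.injective_id X_zero_dvd_derivShift_X_zero ?_
    rw [derivShift_map_evalRingHom_of_gammaShift_eq h]
    exact ih.mul_left _

theorem X_zero_dvd_of_gammaShift_eq [CharZero K] (h : gammaShift K P = C q * P)
    (hq : q.IsRoot 0) : X (toDual 0) ∣ P := by
  have hinj : Function.Injective fun n : ℕ => (n : K) + 1 :=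
    (add_left_injective 1).comp Nat.cast_injective
  refine X_dvd_of_X_dvd_map_evalRingHom (Set.infinite_range_of_injective hinj) ?_
  rintro _ ⟨n, rfl⟩
  exact X_zero_dvd_map_evalRingHom_of_gammaShift_eq h hq n

end Eigenvector

theorem eq_bot_of_gammaShift_mem [IsAlgClosed K] [CharZero K] {I : Ideal (MvPolynomial ℕᵒᵈ K[X])}
    [I.IsPrime] (hS : ∀ P ∈ I, gammaShift K P ∈ I) (hC : ∀ p : K[X], C p ∈ I → p = 0)
    (hX : X (toDual 0) ∉ I) : I = ⊥ := by
  by_contra hI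
  obtain ⟨P, hP⟩ := exists_isMinimalIn MonomialOrder.lex hI
  obtain ⟨q, hq⟩ := hP.exists_eq_C_mul (hS P hP.mem) (degree_gammaShift P)
  have hdegP : (MonomialOrder.lex.degree P).degree ≠ 0 := by
    intro h
    have hPC := MonomialOrder.eq_C_of_degree_eq_zero ((Finsupp.degree_eq_zero_iff _).1 h)
    have hlead := hC _ (hPC ▸ hP.mem)
    exact hP.ne_zero (MonomialOrder.leadingCoeff_eq_zero_iff.1 hlead)
  have hdegq : q.degree ≠ 0 := fun h => hdegP <|
    (natDegree_of_gammaShift_eq_C_mul hP.ne_zero hq).symm.trans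
      (Polynomial.natDegree_eq_of_degree_eq_some h)
  obtain ⟨α, hα⟩ := IsAlgClosed.exists_root q hdegq
  obtain rfl | hα0 := eq_or_ne α 0
  · exact hP.not_X_dvd hX (X_zero_dvd_of_gammaShift_eq hq hα)
  · refine hP.not_C_dvd (fun h => Polynomial.X_sub_C_ne_zero _ (hC _ h)) ?_
      (C_X_sub_C_dvd_of_gammaShift_eq hq hα hα0)
    rw [Polynomial.natDegree_X_sub_C]
    exact one_ne_zero

end GammaShift

/-! ### Hölder's theorem -/

section Hoelder

open MvPolynomial OrderDual
open scoped Polynomial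

theorem iteratedDeriv_id_mul {𝕜 : Type*} [NontriviallyNormedField 𝕜] [CompleteSpace 𝕜]
    {g : 𝕜 → 𝕜} {z : 𝕜} (hg : AnalyticAt 𝕜 g z) (n : ℕ) :
    iteratedDeriv n (fun w => w * g w) z =
      z * iteratedDeriv n g z + n * iteratedDeriv (n - 1) g z := by
  rw [iteratedDeriv_fun_mul contDiffAt_fun_id hg.contDiffAt]
  obtain _ | n := n
  · simp
  · have hid (i : ℕ) : iteratedDeriv (i + 1 + 1) (fun w : 𝕜 => w) z = 0 := by
      simp [iteratedDeriv_fun_id]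
    rw [Finset.sum_range_succ', Finset.sum_range_succ',
      Finset.sum_eq_zero fun i _ => by rw [hid, mul_zero, zero_mul]]
    simp [add_comm]

theorem iteratedDeriv_add_one_of_functional_eq {𝕜 : Type*} [NontriviallyNormedField 𝕜]
    [CompleteSpace 𝕜] {g : 𝕜 → 𝕜} {z : 𝕜} (hg : AnalyticAt 𝕜 g z)
    (hfe : ∀ z, g (z + 1) = -z * g z) (n : ℕ) :
    iteratedDeriv n g (z + 1) = -z * iteratedDeriv n g z - n * iteratedDeriv (n - 1) g z := calc
  iteratedDeriv n g (z + 1) = iteratedDeriv n (fun w => g (w + 1)) z :=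
    (congrFun (iteratedDeriv_comp_add_const n g 1) z).symm
  _ = iteratedDeriv n (fun w => -(w * g w)) z := by simp only [hfe, neg_mul]
  _ = -iteratedDeriv n (fun w => w * g w) z := iteratedDeriv_fun_neg n _ z
  _ = _ := by rw [iteratedDeriv_id_mul hg]; ring

/-- Evaluation of the differential polynomial `P (z, Y_0, Y_1, …)` at `z` and the derivatives
`g z, g' z, …`. -/
noncomputable def jetEval (g : ℂ → ℂ) (z : ℂ) : MvPolynomial ℕᵒᵈ ℂ[X] →+* ℂ :=
  eval₂Hom (Polynomial.evalRingHom z) fun i => iteratedDeriv (ofDual i) g z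

/-- The ideal of algebraic differential equations over `ℂ[z]` satisfied by `g` on all of `ℂ`. -/
noncomputable def relationIdeal (g : ℂ → ℂ) : Ideal (MvPolynomial ℕᵒᵈ ℂ[X]) :=
  RingHom.ker (RingHom.pi (jetEval g))

variable {g : ℂ → ℂ} {P : MvPolynomial ℕᵒᵈ ℂ[X]}

theorem mem_relationIdeal : P ∈ relationIdeal g ↔ ∀ z, jetEval g z P = 0 :=
  funext_iff

theorem jetEval_C (p : ℂ[X]) (z : ℂ) : jetEval g z (C p) = p.eval z :=
  eval₂Hom_C _ _ p

theorem jetEval_X (i : ℕᵒᵈ) (z : ℂ) : jetEval g z (X i) = iteratedDeriv (ofDual i) g z :=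
  eval₂Hom_X' _ _ i

theorem C_mem_relationIdeal_iff {p : ℂ[X]} : C p ∈ relationIdeal g ↔ p = 0 := by
  simp only [mem_relationIdeal, jetEval_C]
  exact ⟨fun h => Polynomial.funext fun z => by rw [h z, Polynomial.eval_zero],
    fun h z => by rw [h, Polynomial.eval_zero]⟩

theorem X_zero_mem_relationIdeal_iff : X (toDual 0) ∈ relationIdeal g ↔ g = 0 := by
  simp only [mem_relationIdeal, jetEval_X, ofDual_toDual, iteratedDeriv_zero]
  exact funext_iff.symm

theorem jetEval_map_C_rename_toDual (P : MvPolynomial ℕ ℂ) (z : ℂ) :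
    jetEval g z (rename toDual (map Polynomial.C P)) = aeval (fun i => iteratedDeriv i g z) P := by
  rw [jetEval, coe_eval₂Hom, eval₂_rename, eval₂_map, aeval_def]
  congr 1
  ext a
  simp

theorem analyticOnNhd_jetEval (hg : Differentiable ℂ g) (P : MvPolynomial ℕᵒᵈ ℂ[X]) :
    AnalyticOnNhd ℂ (fun z => jetEval g z P) Set.univ := by
  intro c _
  induction P using MvPolynomial.induction_on with
  | C p =>
    simp only [jetEval_C]
    exact p.differentiable.analyticAt c
  | add P Q hP hQ =>
    simp only [map_add]
    exact hP.fun_add hQ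
  | mul_X P i hP =>
    simp only [map_mul, jetEval_X]
    exact hP.fun_mul (analyticAt_iteratedDeriv (hg.analyticAt c) _)

theorem isPrime_relationIdeal (hg : Differentiable ℂ g) : (relationIdeal g).IsPrime := by
  refine ⟨(Ideal.ne_top_iff_one _).2 fun h => ?_, fun {P Q} hPQ => ?_⟩
  · exact one_ne_zero (C_mem_relationIdeal_iff.1 (by rwa [C_1]))
  · have hmul : ∀ z ∈ Set.univ, jetEval g z P * jetEval g z Q = 0 := fun z _ => by
      rw [← map_mul, mem_relationIdeal.1 hPQ z]
    have hor := AnalyticOnNhd.eq_zero_or_eq_zero_of_mul_eq_zero (analyticOnNhd_jetEval hg P)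
      (analyticOnNhd_jetEval hg Q) hmul isPreconnected_univ
    simpa only [Set.mem_univ, forall_const, ← mem_relationIdeal] using hor

theorem jetEval_gammaShift_of_functional_eq (hg : Differentiable ℂ g)
    (hfe : ∀ z, g (z + 1) = -z * g z) (z : ℂ) (P : MvPolynomial ℕᵒᵈ ℂ[X]) :
    jetEval g z (gammaShift ℂ P) = jetEval g (z + 1) P := by
  have hcomp : (jetEval g z).comp (gammaShift ℂ) = jetEval g (z + 1) := by
    refine MvPolynomial.ringHom_ext (fun p => ?_) fun i => ?_
    · simp [gammaShift, derivShift_C, jetEval_C, Polynomial.taylor_eval]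
    · simp [gammaShift, derivShift_X, jetEval_C, jetEval_X,
        iteratedDeriv_add_one_of_functional_eq (hg.analyticAt z) hfe]
  exact RingHom.congr_fun hcomp P

theorem relationIdeal_eq_bot_of_functional_eq (hg : Differentiable ℂ g) (hg0 : g ≠ 0)
    (hfe : ∀ z, g (z + 1) = -z * g z) : relationIdeal g = ⊥ := by
  have := isPrime_relationIdeal hg
  refine eq_bot_of_gammaShift_mem (fun P hP => mem_relationIdeal.2 fun z => ?_)
    (fun _ => C_mem_relationIdeal_iff.1) (mt X_zero_mem_relationIdeal_iff.1 hg0)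
  rw [jetEval_gammaShift_of_functional_eq hg hfe]
  exact mem_relationIdeal.1 hP (z + 1)

theorem algebraicIndependent_taylorSeries_iteratedDeriv_of_functional_eq (hg : Differentiable ℂ g)
    (hg0 : g ≠ 0) (hfe : ∀ z, g (z + 1) = -z * g z) (c : ℂ) :
    AlgebraicIndependent ℂ fun i => taylorSeries c (iteratedDeriv i g) := by
  refine algebraicIndependent_iff.2 fun P hP => ?_
  have han : AnalyticOnNhd ℂ (fun z => aeval (fun i => iteratedDeriv i g z) P) Set.univ :=
    fun z _ => AnalyticAt.aeval_mvPolynomial (analyticAt_iteratedDeriv (hg.analyticAt z)) P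
  rw [← taylorSeries_aeval (analyticAt_iteratedDeriv (hg.analyticAt c))] at hP
  have hlocal := eventually_eq_zero_of_taylorSeries_eq_zero (han c (Set.mem_univ c)) hP
  have hzero := han.eqOn_zero_of_preconnected_of_eventuallyEq_zero isPreconnected_univ
    (Set.mem_univ c) hlocal
  have hmem : rename toDual (map Polynomial.C P) ∈ relationIdeal g :=
    mem_relationIdeal.2 fun z =>
      (jetEval_map_C_rename_toDual P z).trans (hzero (Set.mem_univ z))
  rw [relationIdeal_eq_bot_of_functional_eq hg hg0 hfe, Ideal.mem_bot] at hmem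
  have hmap := (map_eq_zero_iff _ (rename_injective _ toDual.injective)).1 hmem
  exact (map_eq_zero_iff _ (map_injective _ Polynomial.C_injective)).1 hmap

theorem not_isDiffAlgebraic_taylorSeries_of_functional_eq (hg : Differentiable ℂ g) (hg0 : g ≠ 0)
    (hfe : ∀ z, g (z + 1) = -z * g z) (c : ℂ) :
    ¬ IsDiffAlgebraic (PowerSeries.derivative ℂ) (taylorSeries c g) := by
  intro h
  refine h.not_algebraicIndependent_iterate ?_
  simpa only [iterate_derivative_taylorSeries] using
    algebraicIndependent_taylorSeries_iteratedDeriv_of_functional_eq hg hg0 hfe c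

end Hoelder

/-! ### Hadamard's functional equation -/

theorem differentiable_one_div_Gamma_one_sub :
    Differentiable ℂ fun w : ℂ => 1 / Complex.Gamma (1 - w) := by
  simp only [one_div]
  exact Complex.differentiable_one_div_Gamma.comp (differentiable_id.const_sub 1)

theorem one_div_Gamma_one_sub_ne_zero : (fun w : ℂ => 1 / Complex.Gamma (1 - w)) ≠ 0 := by
  intro h
  simpa using congrFun h 0

theorem one_div_Gamma_one_sub_add_one (z : ℂ) :
    1 / Complex.Gamma (1 - (z + 1)) = -z * (1 / Complex.Gamma (1 - z)) := by
  rw [one_div, one_div, show 1 - (z + 1) = -z by ring, sub_eq_neg_add]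
  exact Complex.one_div_Gamma_eq_self_mul_one_div_Gamma_add_one (-z)

theorem exists_eventually_analyticAt_and_add {𝕜 E : Type*} [NontriviallyNormedField 𝕜]
    [NormedAddCommGroup E] [NormedSpace 𝕜 E] [CompleteSpace E] {H : 𝕜 → E}
    (hH : MeromorphicOn H Set.univ) (s : 𝕜) :
    ∃ c, ∀ᶠ z in 𝓝 c, AnalyticAt 𝕜 H z ∧ AnalyticAt 𝕜 H (z + s) := by
  have hmap : Filter.Tendsto (· + s) (𝓝[≠] (0 : 𝕜)) (𝓝[≠] (0 + s)) :=
    (continuous_add_const s).continuousAt.continuousWithinAt.tendsto_nhdsWithin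
      fun _ h => (add_left_injective s).ne h
  obtain ⟨c, hc, hcs⟩ := ((hH 0 (Set.mem_univ 0)).eventually_analyticAt.and
    (hmap.eventually (hH (0 + s) (Set.mem_univ _)).eventually_analyticAt)).exists
  exact ⟨c, hc.eventually_analyticAt.and
    ((continuous_add_const s).continuousAt.eventually hcs.eventually_analyticAt)⟩

theorem hadamard_diffTranscendental_general {H g : ℂ → ℂ} {c : ℂ} (hc : AnalyticAt ℂ H c)
    (hc1 : AnalyticAt ℂ H (c + 1)) (hg : Differentiable ℂ g) (hg0 : g ≠ 0)
    (hgfe : ∀ z, g (z + 1) = -z * g z) (hfe : ∀ᶠ z in 𝓝 c, H (z + 1) = z * H z + g z) :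
    ¬ DifferentiallyAlgebraic H := by
  intro hH
  have hshift : taylorSeries (c + 1) H =
      taylorSeries c id * taylorSeries c H + taylorSeries c g := calc
    _ = taylorSeries c fun z => H (z + 1) := (taylorSeries_comp_add_const c 1 H).symm
    _ = taylorSeries c fun z => id z * H z + g z := taylorSeries_congr hfe
    _ = _ := by
      rw [taylorSeries_add (analyticAt_id.fun_mul hc) (hg.analyticAt c),
        taylorSeries_mul analyticAt_id hc]
  have hdiff : IsDiffAlgebraic (PowerSeries.derivative ℂ)
      (taylorSeries (c + 1) H - taylorSeries c id * taylorSeries c H) :=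
    (hH.isDiffAlgebraic_taylorSeries hc1).sub <|
      (IsDiffAlgebraic.of_derivation_eq_one (derivative_taylorSeries_id c)).mul
        (hH.isDiffAlgebraic_taylorSeries hc)
  rw [hshift, add_sub_cancel_left] at hdiff
  exact not_isDiffAlgebraic_taylorSeries_of_functional_eq hg hg0 hgfe c hdiff

/-- Every function meromorphic on ℂ satisfying Hadamard's functional equation
`H (z+1) = z * H z + 1 / Γ (1-z)` (wherever all three terms are analytic) is
differentially transcendental. -/
theorem hadamard_diffTranscendental (H : ℂ → ℂ)
    (hmero : MeromorphicOn H Set.univ)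
    (hfe : ∀ z : ℂ, AnalyticAt ℂ H (z + 1) → AnalyticAt ℂ H z →
      AnalyticAt ℂ (fun w : ℂ => 1 / Complex.Gamma (1 - w)) z →
      H (z + 1) = z * H z + 1 / Complex.Gamma (1 - z)) :
    ¬ DifferentiallyAlgebraic H := by
  obtain ⟨c, hc⟩ := exists_eventually_analyticAt_and_add hmero 1
  have hg := differentiable_one_div_Gamma_one_sub
  exact hadamard_diffTranscendental_general hc.self_of_nhds.1 hc.self_of_nhds.2 hg
    one_div_Gamma_one_sub_ne_zero one_div_Gamma_one_sub_add_one
    (hc.mono fun z hz => hfe z hz.2 hz.1 (hg.analyticAt z))
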